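/- Let n ≥ 2, p > 1 not an even integer, f ∈ L^∞(S^{n-1}) bounded, and H(x) = ∫_{S^{n-1}} |⟨x,ξ⟩|^p f(ξ) dξ. Then for u ∈ R^n \ {0}, the second partial derivatives are given by ∂²H/∂x_i∂x_j (u) = p(p−1) ∫_{S^{n-1}} |⟨u,ξ⟩|^{p−2} ξ_i ξ_j f(ξ) dξ. -/

import Mathlib

open MeasureTheory Real Set Metric
open scoped RealInnerProductSpace ENNReal MeasureTheory

noncomputable section


/-- Partial derivative in the `i`-th coordinate direction. -/
def pd (n : ℕ) (i : Fin n) (g : EuclideanSpace ℝ (Fin n) → ℝ) :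
    EuclideanSpace ℝ (Fin n) → ℝ :=
  fun x => fderiv ℝ g x (EuclideanSpace.single i 1)

/-- Iterated mixed partial derivative along a list of coordinate directions
(a multi-index `α` corresponds to the list containing `i` with multiplicity `α_i`). -/
def mpd (n : ℕ) : List (Fin n) → (EuclideanSpace ℝ (Fin n) → ℝ) → EuclideanSpace ℝ (Fin n) → ℝ
  | [], g => g
  | i :: L, g => pd n i (mpd n L g)

/-! Differentiating `|⟪x, ξ⟫| ^ p` twice under the integral sign gives the formula; the integrand is
dominated because `t ↦ |t| ^ (p - 2) * t` satisfies a Lipschitz bound around each `a ≠ 0` with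
constant of order `|a| ^ (p - 2) + 1`. For `p < 2` this constant blows up as `a → 0`, and the point
is that `|⟪u, ξ⟫| ^ (p - 2)` is still integrable over the sphere. By rotation invariance and
homogeneity it suffices to show this for a single nonzero `u`. Averaging over a Gaussian vector `u`
and exchanging the integrals leaves the total mass of the sphere times the absolute moment of order
`p - 2 > -1` of a real Gaussian variable, which is finite. The total mass is finite because two
stereographic charts cover the sphere by Lipschitz images of balls.
-/

section AbsRpow

variable {r p R a b : ℝ}

lemma hasDerivAt_abs_rpow_mul_self (h : a ≠ 0 ∨ 0 < r) :
    HasDerivAt (fun t : ℝ => |t| ^ r * t) ((r + 1) * |a| ^ r) a := by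
  rcases eq_or_ne a 0 with rfl | ha
  · have hr : 0 < r := h.resolve_left (not_not.2 rfl)
    have hcont : ContinuousAt (fun t : ℝ => |t| ^ r) 0 :=
      continuous_abs.continuousAt.rpow_const (Or.inr hr.le)
    rw [hasDerivAt_iff_tendsto_slope,
      show (r + 1) * |(0 : ℝ)| ^ r = |(0 : ℝ)| ^ r by simp [zero_rpow hr.ne']]
    refine (hcont.tendsto.mono_left nhdsWithin_le_nhds).congr' ?_
    filter_upwards [self_mem_nhdsWithin] with t (ht : t ≠ 0)
    simp [slope_def_field, ht]
  · refine (((hasDerivAt_abs ha).rpow_const (Or.inl (abs_ne_zero.2 ha))).mul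
      (hasDerivAt_id a)).congr_deriv ?_
    have hpow : |a| ^ r = |a| ^ (r - 1) * |a| := by
      rw [← rpow_add_one (abs_ne_zero.2 ha), sub_add_cancel]
    calc (SignType.sign a : ℝ) * r * |a| ^ (r - 1) * id a + |a| ^ r * 1
        = r * (|a| ^ (r - 1) * (a * SignType.sign a)) + |a| ^ r := by simp only [id]; ring
      _ = (r + 1) * |a| ^ r := by rw [self_mul_sign, ← hpow]; ring

lemma abs_abs_rpow_sub_abs_rpow_le (hp : 1 < p) (ha : |a| ≤ R) (hb : |b| ≤ R) :
    |(|b| ^ p - |a| ^ p)| ≤ p * R ^ (p - 1) * |b - a| := by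
  have hderiv_le : ∀ t ∈ Icc (-R) R, ‖p * |t| ^ (p - 2) * t‖ ≤ p * R ^ (p - 1) := by
    intro t ht
    have hnorm : ‖p * |t| ^ (p - 2) * t‖ = p * |t| ^ (p - 1) := by
      rw [show p - 1 = p - 2 + 1 by ring, rpow_add_one' (abs_nonneg t) (by linarith), norm_mul,
        norm_of_nonneg (by positivity), norm_eq_abs, mul_assoc]
    rw [hnorm]
    exact mul_le_mul_of_nonneg_left
      (rpow_le_rpow (abs_nonneg t) (abs_le.2 ht) (by linarith)) (by linarith)
  exact (convex_Icc (-R) R).norm_image_sub_le_of_norm_hasDerivWithin_le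
    (fun t _ => (hasDerivAt_abs_rpow t hp).hasDerivWithinAt) hderiv_le (abs_le.1 ha) (abs_le.1 hb)

lemma abs_abs_rpow_mul_self_sub_le_of_pos (hr : 0 < r) (ha : |a| ≤ R) (hb : |b| ≤ R) :
    |(|b| ^ r * b - |a| ^ r * a)| ≤ (r + 1) * R ^ r * |b - a| := by
  have hderiv_le : ∀ t ∈ Icc (-R) R, ‖(r + 1) * |t| ^ r‖ ≤ (r + 1) * R ^ r := by
    intro t ht
    rw [norm_of_nonneg (by positivity)]
    gcongr
    exact abs_le.2 ht
  exact (convex_Icc (-R) R).norm_image_sub_le_of_norm_hasDerivWithin_le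
    (fun t _ => (hasDerivAt_abs_rpow_mul_self (.inr hr)).hasDerivWithinAt) hderiv_le
    (abs_le.1 ha) (abs_le.1 hb)

lemma abs_rpow_sub_rpow_mul_le {x y : ℝ} (hr : -1 < r) (hr' : r ≤ 0) (hx : 0 < x) (hy : 0 ≤ y) :
    |y ^ r - x ^ r| * y ≤ x ^ r * |y - x| := by
  rcases hy.eq_or_lt with rfl | hy
  · simp only [mul_zero]; positivity
  have hxr : x ^ (r + 1) = x ^ r * x := rpow_add_one hx.ne' r
  have hyr : y ^ (r + 1) = y ^ r * y := rpow_add_one hy.ne' r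
  rcases le_total x y with hxy | hxy
  · have hanti : y ^ r ≤ x ^ r := rpow_le_rpow_of_nonpos hx hxy hr'
    have hmono : x ^ (r + 1) ≤ y ^ (r + 1) := rpow_le_rpow hx.le hxy (by linarith)
    rw [abs_of_nonpos (sub_nonpos.2 hanti), abs_of_nonneg (sub_nonneg.2 hxy)]
    linarith
  · have hanti : x ^ r ≤ y ^ r := rpow_le_rpow_of_nonpos hy hxy hr'
    have hmono : y ^ (r + 1) ≤ x ^ (r + 1) := rpow_le_rpow hy.le hxy (by linarith)
    rw [abs_of_nonneg (sub_nonneg.2 hanti), abs_of_nonpos (sub_nonpos.2 hxy)]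
    linarith

lemma abs_abs_rpow_mul_self_sub_le_of_nonpos (hr : -1 < r) (hr' : r ≤ 0) (ha : a ≠ 0) :
    |(|b| ^ r * b - |a| ^ r * a)| ≤ 2 * |a| ^ r * |b - a| :=
  calc |(|b| ^ r * b - |a| ^ r * a)|
      = |(|b| ^ r - |a| ^ r) * b + |a| ^ r * (b - a)| := by congr 1; ring
    _ ≤ |(|b| ^ r - |a| ^ r)| * |b| + |a| ^ r * |b - a| := by
        refine (abs_add_le _ _).trans_eq ?_
        rw [abs_mul, abs_mul, abs_of_nonneg (rpow_nonneg (abs_nonneg a) r)]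
    _ ≤ |a| ^ r * |(|b| - |a|)| + |a| ^ r * |b - a| := by
        gcongr ?_ + _
        exact abs_rpow_sub_rpow_mul_le hr hr' (abs_pos.2 ha) (abs_nonneg b)
    _ ≤ |a| ^ r * |b - a| + |a| ^ r * |b - a| := by
        gcongr ?_ + _
        exact mul_le_mul_of_nonneg_left (abs_abs_sub_abs_le_abs_sub b a) (by positivity)
    _ = 2 * |a| ^ r * |b - a| := by ring

lemma abs_abs_rpow_mul_self_sub_le (hr : -1 < r) (ha₀ : a ≠ 0) (ha : |a| ≤ R) (hb : |b| ≤ R) :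
    |(|b| ^ r * b - |a| ^ r * a)| ≤ (2 * |a| ^ r + (r + 1) * R ^ r) * |b - a| := by
  have hR : 0 ≤ R := (abs_nonneg a).trans ha
  have hr₁ : 0 ≤ r + 1 := by linarith
  rw [add_mul]
  rcases lt_or_ge 0 r with hpos | hnonpos
  · exact (abs_abs_rpow_mul_self_sub_le_of_pos hpos ha hb).trans
      (le_add_of_nonneg_left (by positivity))
  · exact (abs_abs_rpow_mul_self_sub_le_of_nonpos hr hnonpos ha₀).trans
      (le_add_of_nonneg_right (by positivity))

end AbsRpow

section RidgeFunctions

variable {E : Type*} [NormedAddCommGroup E] [InnerProductSpace ℝ E]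

lemma abs_real_inner_le_norm_of_norm_le_one (x : E) {ξ : E} (hξ : ‖ξ‖ ≤ 1) : |⟪x, ξ⟫| ≤ ‖x‖ :=
  (abs_real_inner_le_norm x ξ).trans (mul_le_of_le_one_right (norm_nonneg x) hξ)

variable [MeasurableSpace E] [BorelSpace E] [SecondCountableTopology E] {ν : Measure E}
  {ψ ψ' : ℝ → ℝ} {B g : E → ℝ} {x : E}

lemma integrable_comp_inner_mul (hψ : Measurable ψ) (hν : ∀ᵐ ξ ∂ν, ‖ξ‖ ≤ 1)
    (hg : Integrable g ν) (hBg : Integrable (fun ξ => B ξ * g ξ) ν)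
    (hψ_le : ∀ᵐ ξ ∂ν, |ψ 0 - ψ ⟪x, ξ⟫| ≤ B ξ * |⟪x, ξ⟫|) :
    Integrable (fun ξ => ψ ⟪x, ξ⟫ * g ξ) ν := by
  refine ((hg.norm.const_mul |ψ 0|).add (hBg.norm.mul_const ‖x‖)).mono'
    ((hψ.comp (by fun_prop)).aestronglyMeasurable.mul hg.aestronglyMeasurable) ?_
  filter_upwards [hν, hψ_le] with ξ hξ hψξ
  have hB : |ψ 0 - ψ ⟪x, ξ⟫| ≤ |B ξ| * ‖x‖ := hψξ.trans <|
    mul_le_mul (le_abs_self _) (abs_real_inner_le_norm_of_norm_le_one x hξ) (abs_nonneg _)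
      (abs_nonneg _)
  calc ‖ψ ⟪x, ξ⟫ * g ξ‖ = |ψ 0 - (ψ 0 - ψ ⟪x, ξ⟫)| * |g ξ| := by simp
    _ ≤ (|ψ 0| + |B ξ| * ‖x‖) * |g ξ| := by
        gcongr
        exact (abs_sub _ _).trans (by gcongr)
    _ = |ψ 0| * ‖g ξ‖ + ‖B ξ * g ξ‖ * ‖x‖ := by simp only [norm_mul, norm_eq_abs]; ring

lemma hasFDerivAt_integral_comp_inner_mul (hψ : Measurable ψ) (hψ' : Measurable ψ')
    (hν : ∀ᵐ ξ ∂ν, ‖ξ‖ ≤ 1) (hg : Integrable g ν) (hBg : Integrable (fun ξ => B ξ * g ξ) ν)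
    (hderiv : ∀ᵐ ξ ∂ν, HasDerivAt ψ (ψ' ⟪x, ξ⟫) ⟪x, ξ⟫)
    (hlip : ∀ᵐ ξ ∂ν, ∀ b, |b| ≤ ‖x‖ + 1 → |ψ b - ψ ⟪x, ξ⟫| ≤ B ξ * |b - ⟪x, ξ⟫|) :
    Integrable (fun ξ => (ψ' ⟪x, ξ⟫ * g ξ) • innerSL ℝ ξ) ν ∧
      HasFDerivAt (fun y => ∫ ξ, ψ ⟪y, ξ⟫ * g ξ ∂ν)
        (∫ ξ, (ψ' ⟪x, ξ⟫ * g ξ) • innerSL ℝ ξ ∂ν) x := by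
  have hmeas : ∀ y, AEStronglyMeasurable (fun ξ => ψ ⟪y, ξ⟫ * g ξ) ν := fun y =>
    (hψ.comp (by fun_prop)).aestronglyMeasurable.mul hg.aestronglyMeasurable
  have hmeas' : AEStronglyMeasurable (fun ξ => (ψ' ⟪x, ξ⟫ * g ξ) • innerSL ℝ ξ) ν :=
    ((hψ'.comp (by fun_prop)).aestronglyMeasurable.mul hg.aestronglyMeasurable).smul
      ((innerSL ℝ).continuous.comp_aestronglyMeasurable aestronglyMeasurable_id)
  have hinner : ∀ᵐ ξ ∂ν, ∀ y : E, |⟪y, ξ⟫| ≤ ‖y‖ := hν.mono fun ξ hξ y =>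
    abs_real_inner_le_norm_of_norm_le_one y hξ
  have hint : Integrable (fun ξ => ψ ⟪x, ξ⟫ * g ξ) ν :=
    integrable_comp_inner_mul hψ hν hg hBg <| hlip.mono fun ξ hξ => by
      simpa using hξ 0 (by simpa using by positivity)
  refine hasFDerivAt_integral_of_dominated_loc_of_lip' (ball_mem_nhds x one_pos)
    (fun y _ => hmeas y) hint hmeas' ?_ hBg.norm ?_
  · filter_upwards [hinner, hlip] with ξ hξ hlipξ y hy
    have hyx : ‖y‖ ≤ ‖x‖ + 1 := by
      linarith [norm_le_norm_add_norm_sub' y x, mem_ball_iff_norm.1 hy]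
    calc ‖ψ ⟪y, ξ⟫ * g ξ - ψ ⟪x, ξ⟫ * g ξ‖ = |ψ ⟪y, ξ⟫ - ψ ⟪x, ξ⟫| * |g ξ| := by
          rw [← sub_mul, norm_mul, norm_eq_abs, norm_eq_abs]
      _ ≤ |B ξ| * ‖y - x‖ * |g ξ| := by
          gcongr
          refine (hlipξ _ ((hξ y).trans hyx)).trans ?_
          rw [← inner_sub_left]
          exact mul_le_mul (le_abs_self _) (hξ _) (abs_nonneg _) (abs_nonneg _)
      _ = ‖B ξ * g ξ‖ * ‖y - x‖ := by simp only [norm_mul, norm_eq_abs]; ring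
  · filter_upwards [hderiv] with ξ hξ
    have hinnerSL : HasFDerivAt (fun y : E => ⟪y, ξ⟫) (innerSL ℝ ξ) x :=
      (innerSL ℝ ξ).hasFDerivAt.congr_of_eventuallyEq (.of_forall fun y => real_inner_comm ξ y)
    refine ((hξ.comp_hasFDerivAt x hinnerSL).mul_const (g ξ)).congr_fderiv ?_
    rw [smul_smul, mul_comm]

lemma fderiv_integral_comp_inner_mul (hψ : Measurable ψ) (hψ' : Measurable ψ')
    (hν : ∀ᵐ ξ ∂ν, ‖ξ‖ ≤ 1) (hg : Integrable g ν) (hBg : Integrable (fun ξ => B ξ * g ξ) ν)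
    (hderiv : ∀ᵐ ξ ∂ν, HasDerivAt ψ (ψ' ⟪x, ξ⟫) ⟪x, ξ⟫)
    (hlip : ∀ᵐ ξ ∂ν, ∀ b, |b| ≤ ‖x‖ + 1 → |ψ b - ψ ⟪x, ξ⟫| ≤ B ξ * |b - ⟪x, ξ⟫|) (v : E) :
    fderiv ℝ (fun y => ∫ ξ, ψ ⟪y, ξ⟫ * g ξ ∂ν) x v =
      ∫ ξ, ψ' ⟪x, ξ⟫ * (⟪v, ξ⟫ * g ξ) ∂ν := by
  obtain ⟨hint, hfderiv⟩ := hasFDerivAt_integral_comp_inner_mul hψ hψ' hν hg hBg hderiv hlip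
  rw [hfderiv.fderiv, ContinuousLinearMap.integral_apply hint]
  refine integral_congr_ae (.of_forall fun ξ => ?_)
  simp only [FunLike.coe_smul, Pi.smul_apply, innerSL_apply_apply, smul_eq_mul,
    real_inner_comm v]
  ring

end RidgeFunctions

section LpCosineTransform

variable {E : Type*} [NormedAddCommGroup E] [InnerProductSpace ℝ E] [MeasurableSpace E]
  {ν : Measure E} {f : E → ℝ} {p : ℝ} {u : E}

/-- The `L_p` cosine transform of the density `f` with respect to the measure `ν`, classically the
surface measure of the unit sphere. -/
def lpCosineTransform (p : ℝ) (ν : Measure E) (f : E → ℝ) (x : E) : ℝ :=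
  ∫ ξ, |⟪x, ξ⟫| ^ p * f ξ ∂ν

variable [BorelSpace E] [SecondCountableTopology E]

lemma fderiv_lpCosineTransform_apply (hp : 1 < p) (hν : ∀ᵐ ξ ∂ν, ‖ξ‖ ≤ 1) (hf : Integrable f ν)
    (x v : E) :
    fderiv ℝ (lpCosineTransform p ν f) x v =
      p * ∫ ξ, |⟪x, ξ⟫| ^ (p - 2) * ⟪x, ξ⟫ * (⟪v, ξ⟫ * f ξ) ∂ν := by
  have hlip : ∀ᵐ ξ ∂ν, ∀ b, |b| ≤ ‖x‖ + 1 →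
      |(|b| ^ p - |⟪x, ξ⟫| ^ p)| ≤ p * (‖x‖ + 1) ^ (p - 1) * |b - ⟪x, ξ⟫| := by
    filter_upwards [hν] with ξ hξ b hb
    have hxξ := abs_real_inner_le_norm_of_norm_le_one x hξ
    exact abs_abs_rpow_sub_abs_rpow_le hp (by linarith) hb
  refine (fderiv_integral_comp_inner_mul (ψ := fun t => |t| ^ p)
    (ψ' := fun t => p * |t| ^ (p - 2) * t) (by fun_prop) (by fun_prop) hν hf
    (hf.const_mul _) (.of_forall fun ξ => hasDerivAt_abs_rpow _ hp) hlip v).trans ?_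
  simp only [mul_assoc, integral_const_mul]

lemma fderiv_fderiv_lpCosineTransform_apply (hp : 1 < p) (hν : ∀ᵐ ξ ∂ν, ‖ξ‖ ≤ 1)
    (hf : Integrable f ν) (hu : ∀ᵐ ξ ∂ν, ⟪u, ξ⟫ ≠ 0)
    (hint : Integrable (fun ξ => |⟪u, ξ⟫| ^ (p - 2) * f ξ) ν) (v w : E) :
    fderiv ℝ (fun x => fderiv ℝ (lpCosineTransform p ν f) x v) u w =
      p * (p - 1) * ∫ ξ, |⟪u, ξ⟫| ^ (p - 2) * ⟪w, ξ⟫ * ⟪v, ξ⟫ * f ξ ∂ν := by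
  have hv : ∀ᵐ ξ ∂ν, ‖⟪v, ξ⟫‖ ≤ ‖v‖ := hν.mono fun ξ hξ =>
    abs_real_inner_le_norm_of_norm_le_one v hξ
  have hvmeas : AEStronglyMeasurable (fun ξ => ⟪v, ξ⟫) ν :=
    (by fun_prop : Measurable fun ξ : E => ⟪v, ξ⟫).aestronglyMeasurable
  have hvf : Integrable (fun ξ => ⟪v, ξ⟫ * f ξ) ν := hf.bdd_mul hvmeas hv
  have hBg : Integrable (fun ξ => (2 * |⟪u, ξ⟫| ^ (p - 2) + (p - 2 + 1) * (‖u‖ + 1) ^ (p - 2)) *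
      (⟪v, ξ⟫ * f ξ)) ν := by
    refine (((hint.bdd_mul hvmeas hv).const_mul 2).add
      (hvf.const_mul ((p - 2 + 1) * (‖u‖ + 1) ^ (p - 2)))).congr (.of_forall fun ξ => ?_)
    simp only [Pi.add_apply]
    ring
  have hlip : ∀ᵐ ξ ∂ν, ∀ b, |b| ≤ ‖u‖ + 1 →
      |(|b| ^ (p - 2) * b - |⟪u, ξ⟫| ^ (p - 2) * ⟪u, ξ⟫)| ≤
        (2 * |⟪u, ξ⟫| ^ (p - 2) + (p - 2 + 1) * (‖u‖ + 1) ^ (p - 2)) * |b - ⟪u, ξ⟫| := by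
    filter_upwards [hν, hu] with ξ hξ hξ₀ b hb
    have huξ := abs_real_inner_le_norm_of_norm_le_one u hξ
    exact abs_abs_rpow_mul_self_sub_le (by linarith) hξ₀ (by linarith) hb
  have hfderiv : (fun x => fderiv ℝ (lpCosineTransform p ν f) x v) =
      p • fun x => ∫ ξ, |⟪x, ξ⟫| ^ (p - 2) * ⟪x, ξ⟫ * (⟪v, ξ⟫ * f ξ) ∂ν :=
    funext fun x => fderiv_lpCosineTransform_apply hp hν hf x v
  calc fderiv ℝ (fun x => fderiv ℝ (lpCosineTransform p ν f) x v) u w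
      = p * ∫ ξ, (p - 2 + 1) * |⟪u, ξ⟫| ^ (p - 2) * (⟪w, ξ⟫ * (⟪v, ξ⟫ * f ξ)) ∂ν := by
        rw [hfderiv, fderiv_const_smul_field, Pi.smul_apply, FunLike.coe_smul, Pi.smul_apply,
          smul_eq_mul, fderiv_integral_comp_inner_mul (ψ := fun t => |t| ^ (p - 2) * t)
            (ψ' := fun t => (p - 2 + 1) * |t| ^ (p - 2)) (by fun_prop) (by fun_prop) hν hvf hBg
            (hu.mono fun ξ hξ => hasDerivAt_abs_rpow_mul_self (.inl hξ)) hlip]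
    _ = p * (p - 1) * ∫ ξ, |⟪u, ξ⟫| ^ (p - 2) * ⟪w, ξ⟫ * ⟪v, ξ⟫ * f ξ ∂ν := by
        simp only [mul_assoc, integral_const_mul]
        ring

end LpCosineTransform

section Gaussian

open ProbabilityTheory

lemma integrable_comp_abs {f : ℝ → ℝ} (hf : IntegrableOn f (Ioi 0)) :
    Integrable (fun t => f |t|) := by
  have hpos : IntegrableOn (fun t => f |t|) (Ioi 0) :=
    hf.congr_fun (fun t (ht : 0 < t) => by rw [abs_of_pos ht]) measurableSet_Ioi
  have hneg : IntegrableOn (fun t => f |t|) (Iic 0) := by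
    rw [integrableOn_Iic_iff_integrableOn_Iio]
    simpa using hpos.comp_neg
  rw [← integrableOn_univ, ← Iic_union_Ioi (a := (0 : ℝ))]
  exact hneg.union hpos

lemma integrable_abs_rpow_gaussianReal {s : ℝ} (hs : -1 < s) :
    Integrable (fun t => |t| ^ s) (gaussianReal 0 1) := by
  rw [gaussianReal_of_var_ne_zero 0 one_ne_zero, integrable_withDensity_iff_integrable_smul'
    (measurable_gaussianPDF 0 1) (.of_forall fun _ => gaussianPDF_lt_top)]
  refine ((integrable_comp_abs (integrableOn_rpow_mul_exp_neg_mul_sq one_half_pos hs)).const_mul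
    (√(2 * π))⁻¹).congr (.of_forall fun t => ?_)
  have hexp : -(1 / 2) * t ^ 2 = -(t - 0) ^ 2 / (2 * 1) := by ring
  simp only [toReal_gaussianPDF, gaussianPDFReal, smul_eq_mul, sq_abs, hexp, NNReal.coe_one,
    mul_one]
  ring

variable {E : Type*} [NormedAddCommGroup E] [InnerProductSpace ℝ E] [FiniteDimensional ℝ E]
  [MeasurableSpace E] [BorelSpace E] {ν : Measure E} {s : ℝ}

lemma measurePreserving_inner_stdGaussian {ξ : E} (hξ : ‖ξ‖ = 1) :
    MeasurePreserving (fun x => ⟪x, ξ⟫) (stdGaussian E) (gaussianReal 0 1) := by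
  refine ⟨by fun_prop, ?_⟩
  have hinner : (fun x => ⟪x, ξ⟫) = innerSL ℝ ξ := funext fun x => real_inner_comm ξ x
  rw [hinner, IsGaussian.map_eq_gaussianReal, integral_strongDual_stdGaussian,
    variance_dual_stdGaussian, innerSL_apply_norm, hξ, one_pow, toNNReal_one]

lemma ae_stdGaussian_integrable_abs_inner_rpow [IsFiniteMeasure ν] (hν : ∀ᵐ ξ ∂ν, ‖ξ‖ = 1)
    (hs : -1 < s) : ∀ᵐ x ∂stdGaussian E, Integrable (fun ξ => |⟪x, ξ⟫| ^ s) ν := by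
  have hmeas : Measurable fun z : E × E => |⟪z.1, z.2⟫| ^ s := by fun_prop
  suffices h : Integrable (fun z : E × E => |⟪z.1, z.2⟫| ^ s) ((stdGaussian E).prod ν) from
    ((integrable_prod_iff hmeas.aestronglyMeasurable).1 h).1
  have hslice : ∀ᵐ ξ ∂ν, Integrable (fun x => |⟪x, ξ⟫| ^ s) (stdGaussian E) ∧
      ∫ x, ‖|⟪x, ξ⟫| ^ s‖ ∂stdGaussian E = ∫ t, |t| ^ s ∂gaussianReal 0 1 := by
    filter_upwards [hν] with ξ hξ
    have hmp := measurePreserving_inner_stdGaussian hξ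
    have hpow : Measurable fun t : ℝ => |t| ^ s := by fun_prop
    refine ⟨hmp.integrable_comp_of_integrable (integrable_abs_rpow_gaussianReal hs), ?_⟩
    rw [← hmp.map_eq, integral_map hmp.aemeasurable hpow.aestronglyMeasurable]
    exact integral_congr_ae (.of_forall fun x => norm_of_nonneg (by positivity))
  rw [integrable_prod_iff' hmeas.aestronglyMeasurable]
  exact ⟨hslice.mono fun ξ h => h.1,
    (integrable_const _).congr (hslice.mono fun ξ h => h.2.symm)⟩

lemma ae_stdGaussian_ae_inner_ne_zero [SFinite ν] (hν : ∀ᵐ ξ ∂ν, ‖ξ‖ = 1) :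
    ∀ᵐ x ∂stdGaussian E, ∀ᵐ ξ ∂ν, ⟪x, ξ⟫ ≠ 0 := by
  have hmeas : MeasurableSet {z : E × E | ⟪z.1, z.2⟫ ≠ 0} := by measurability
  rw [Measure.ae_ae_comm hmeas]
  filter_upwards [hν] with ξ hξ
  have : NullSingletonClass (gaussianReal 0 1) := nullSingletonClass_gaussianReal one_ne_zero
  exact (measurePreserving_inner_stdGaussian hξ).quasiMeasurePreserving.ae
    (Measure.ae_ne (gaussianReal 0 1) 0)

end Gaussian

section RotationInvariant

open ProbabilityTheory

variable {E : Type*} [NormedAddCommGroup E] [InnerProductSpace ℝ E] {x u : E}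

lemma exists_linearIsometryEquiv_eq_smul (hx : x ≠ 0) (hu : u ≠ 0) :
    ∃ R : E ≃ₗᵢ[ℝ] E, ∃ c : ℝ, c ≠ 0 ∧ u = c • R x := by
  have hnorm : ‖(‖u‖ / ‖x‖) • x‖ = ‖u‖ := by
    rw [norm_smul, norm_div, norm_norm, norm_norm, div_mul_cancel₀ _ (norm_ne_zero_iff.2 hx)]
  refine ⟨(ℝ ∙ ((‖u‖ / ‖x‖) • x - u))ᗮ.reflection, ‖u‖ / ‖x‖, by positivity, ?_⟩
  rw [← map_smul, Submodule.reflection_sub hnorm]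

variable [FiniteDimensional ℝ E] [MeasurableSpace E] [BorelSpace E] {ν : Measure E}
  [IsFiniteMeasure ν] {s : ℝ}

lemma ae_inner_ne_zero_and_integrable_abs_inner_rpow (hν : ∀ᵐ ξ ∂ν, ‖ξ‖ = 1)
    (hrot : ∀ R : E ≃ₗᵢ[ℝ] E, MeasurePreserving R ν ν) (hs : -1 < s) (hu : u ≠ 0) :
    (∀ᵐ ξ ∂ν, ⟪u, ξ⟫ ≠ 0) ∧ Integrable (fun ξ => |⟪u, ξ⟫| ^ s) ν := by
  obtain ⟨x, hx_ne, hx_int⟩ := ((ae_stdGaussian_ae_inner_ne_zero hν).and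
    (ae_stdGaussian_integrable_abs_inner_rpow hν hs)).exists
  rcases eq_or_ne x 0 with rfl | hx
  · have hν₀ : ν = 0 := by simpa using hx_ne
    simp [hν₀]
  obtain ⟨R, c, hc, rfl⟩ := exists_linearIsometryEquiv_eq_smul hx hu
  have hinner : ∀ ξ, ⟪c • R x, R ξ⟫ = c * ⟪x, ξ⟫ := fun ξ => by
    rw [real_inner_smul_left, R.inner_map_map]
  constructor
  · rw [← (hrot R).map_eq, ae_map_iff (hrot R).aemeasurable (by measurability)]
    filter_upwards [hx_ne] with ξ hξ
    rw [hinner]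
    exact mul_ne_zero hc hξ
  · rw [← (hrot R).integrable_comp_emb R.toHomeomorph.measurableEmbedding]
    refine (hx_int.const_mul (|c| ^ s)).congr (.of_forall fun ξ => ?_)
    rw [Function.comp_apply, hinner, abs_mul, mul_rpow (abs_nonneg c) (abs_nonneg _)]

end RotationInvariant

section SurfaceMeasure

open Module

lemma hausdorffMeasure_finrank_image_lt_top {F X : Type*} [NormedAddCommGroup F] [NormedSpace ℝ F]
    [FiniteDimensional ℝ F] [MeasurableSpace F] [BorelSpace F] [MetricSpace X] [MeasurableSpace X]
    [BorelSpace X] {g : F → X} {K : Set F} (hg : LocallyLipschitzOn K g) (hK : IsCompact K) :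
    μH[finrank ℝ F] (g '' K) < ∞ := by
  obtain ⟨C, hC⟩ := hg.exists_lipschitzOnWith_of_compact hK
  refine (hC.hausdorffMeasure_image_le (Nat.cast_nonneg _)).trans_lt ?_
  exact ENNReal.mul_lt_top (ENNReal.rpow_lt_top_of_nonneg (Nat.cast_nonneg _) ENNReal.coe_ne_top)
    hK.measure_lt_top

variable {E : Type*} [NormedAddCommGroup E] [InnerProductSpace ℝ E]

lemma hemisphere_subset_image_stereoInvFunAux {v : E} (hv : ‖v‖ = 1) :
    sphere (0 : E) 1 ∩ {x | ⟪v, x⟫ ≤ 0} ⊆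
      (stereoInvFunAux v ∘ (↑)) '' closedBall (0 : (ℝ ∙ v)ᗮ) 2 := by
  rintro x ⟨hx, hvx : ⟪v, x⟫ ≤ 0⟩
  have hxv : x ≠ v := by
    rintro rfl
    rw [real_inner_self_eq_norm_sq, hv] at hvx
    norm_num at hvx
  refine ⟨stereoToFun v x, ?_, ?_⟩
  · rw [mem_closedBall_zero_iff, stereoToFun_apply, norm_smul]
    have hscale : ‖2 / (1 - innerSL ℝ v x)‖ ≤ 2 := by
      rw [innerSL_apply_apply, norm_of_nonneg (div_nonneg two_pos.le (by linarith))]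
      exact div_le_self two_pos.le (by linarith)
    have hproj : ‖(ℝ ∙ v)ᗮ.orthogonalProjectionOnto x‖ ≤ 1 :=
      ((ℝ ∙ v)ᗮ.norm_orthogonalProjectionOnto_apply_le x).trans_eq (mem_sphere_zero_iff_norm.1 hx)
    simpa using mul_le_mul hscale hproj (norm_nonneg _) two_pos.le
  · exact congr_arg Subtype.val (stereo_left_inv hv (x := ⟨x, hx⟩) hxv)

variable [MeasurableSpace E] [BorelSpace E]

variable (E) in
/-- The surface measure of the unit sphere, as a measure on the ambient space: the Hausdorff measure
of codimension one. Since Mathlib does not normalise `μH`, this is a constant multiple of the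
classical surface area. -/
def surfaceMeasure : Measure E :=
  μH[(finrank ℝ E : ℝ) - 1].restrict (sphere 0 1)

lemma ae_surfaceMeasure_norm_eq_one : ∀ᵐ ξ ∂surfaceMeasure E, ‖ξ‖ = 1 := by
  filter_upwards [ae_restrict_mem isClosed_sphere.measurableSet] with ξ hξ
  exact mem_sphere_zero_iff_norm.1 hξ

lemma measurePreserving_surfaceMeasure (R : E ≃ₗᵢ[ℝ] E) :
    MeasurePreserving R (surfaceMeasure E) (surfaceMeasure E) := by
  have hpreimage : R ⁻¹' sphere 0 1 = sphere 0 1 := by simp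
  have hrestrict := (R.toIsometryEquiv.measurePreserving_hausdorffMeasure
    ((finrank ℝ E : ℝ) - 1)).restrict_preimage (isClosed_sphere (x := 0) (ε := 1)).measurableSet
  rwa [R.coe_toIsometryEquiv, hpreimage] at hrestrict

variable [FiniteDimensional ℝ E]

lemma hausdorffMeasure_hemisphere_lt_top {v : E} (hv : ‖v‖ = 1) :
    μH[(finrank ℝ E : ℝ) - 1] (sphere (0 : E) 1 ∩ {x | ⟪v, x⟫ ≤ 0}) < ∞ := by
  have hfinrank : (finrank ℝ (ℝ ∙ v)ᗮ : ℝ) = finrank ℝ E - 1 := by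
    have hv₀ : v ≠ 0 := norm_ne_zero_iff.1 (by simp [hv])
    rw [← (ℝ ∙ v).finrank_add_finrank_orthogonal, finrank_span_singleton hv₀]
    simp
  rw [← hfinrank]
  refine (measure_mono (hemisphere_subset_image_stereoInvFunAux hv)).trans_lt
    (hausdorffMeasure_finrank_image_lt_top ?_ (isCompact_closedBall 0 2))
  have hsmooth : ContDiff ℝ 1 (stereoInvFunAux v ∘ ((↑) : (ℝ ∙ v)ᗮ → E)) :=
    contDiff_stereoInvFunAux.comp (ℝ ∙ v)ᗮ.subtypeL.contDiff
  exact hsmooth.locallyLipschitz.locallyLipschitzOn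

instance isFiniteMeasure_surfaceMeasure : IsFiniteMeasure (surfaceMeasure E) := by
  refine ⟨?_⟩
  rw [surfaceMeasure, Measure.restrict_apply_univ]
  rcases (sphere (0 : E) 1).eq_empty_or_nonempty with hempty | ⟨v, hv⟩
  · simp [hempty]
  rw [mem_sphere_zero_iff_norm] at hv
  refine (measure_mono fun x hx => ?_).trans_lt (measure_union_lt_top
    (hausdorffMeasure_hemisphere_lt_top hv)
    (hausdorffMeasure_hemisphere_lt_top ((norm_neg v).trans hv)))
  rcases le_total ⟪v, x⟫ 0 with h | h
  · exact .inl ⟨hx, h⟩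
  · exact .inr ⟨hx, by simpa using h⟩

end SurfaceMeasure

theorem second_derivatives_lp_cosine_general {E : Type*} [NormedAddCommGroup E]
    [InnerProductSpace ℝ E] [FiniteDimensional ℝ E] [MeasurableSpace E] [BorelSpace E] {p : ℝ}
    (hp : 1 < p) {f : E → ℝ} (hf : MemLp f ∞ (surfaceMeasure E)) {u : E} (hu : u ≠ 0) (v w : E) :
    fderiv ℝ (fun x => fderiv ℝ (lpCosineTransform p (surfaceMeasure E) f) x v) u w =
      p * (p - 1) * ∫ ξ, |⟪u, ξ⟫| ^ (p - 2) * ⟪w, ξ⟫ * ⟪v, ξ⟫ * f ξ ∂surfaceMeasure E := by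
  have hnorm := ae_surfaceMeasure_norm_eq_one (E := E)
  obtain ⟨hu_ne, hu_int⟩ := ae_inner_ne_zero_and_integrable_abs_inner_rpow (s := p - 2) hnorm
    measurePreserving_surfaceMeasure (by linarith) hu
  exact fderiv_fderiv_lpCosineTransform_apply hp (hnorm.mono fun ξ hξ => hξ.le)
    (hf.integrable le_top) hu_ne (hu_int.mul_of_top_left hf) v w

theorem second_derivatives_lp_cosine (n : ℕ) (hn : 2 ≤ n) (p : ℝ) (hp : 1 < p)
    (hpe : ∀ k : ℕ, p ≠ 2 * k)
    (f : EuclideanSpace ℝ (Fin n) → ℝ) (hf_meas : Measurable f)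
    (hf_bdd : ∃ M : ℝ, ∀ ξ, |f ξ| ≤ M)
    (H : EuclideanSpace ℝ (Fin n) → ℝ)
    (hH : ∀ x, H x = ∫ ξ in sphere (0 : EuclideanSpace ℝ (Fin n)) 1,
      |⟪x, ξ⟫| ^ p * f ξ ∂(μH[(n : ℝ) - 1])) :
    ∀ u : EuclideanSpace ℝ (Fin n), u ≠ 0 → ∀ i j : Fin n,
      pd n i (pd n j H) u =
        p * (p - 1) *
          ∫ ξ in sphere (0 : EuclideanSpace ℝ (Fin n)) 1,
            |⟪u, ξ⟫| ^ (p - 2) * ξ i * ξ j * f ξ ∂(μH[(n : ℝ) - 1]) := by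
  intro u hu i j
  obtain ⟨M, hM⟩ := hf_bdd
  have hf : MemLp f ∞ (surfaceMeasure (EuclideanSpace ℝ (Fin n))) :=
    memLp_top_of_bound hf_meas.aestronglyMeasurable M (.of_forall hM)
  have hH' : H = lpCosineTransform p (surfaceMeasure (EuclideanSpace ℝ (Fin n))) f := by
    funext x
    simp [hH, lpCosineTransform, surfaceMeasure]
  rw [hH']
  refine (second_derivatives_lp_cosine_general hp hf hu (.single j 1) (.single i 1)).trans ?_
  simp [surfaceMeasure, EuclideanSpace.inner_single_left]
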